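/- Every triangle-free induced subgraph of the triangular lattice is (7,3)-colorable: there is an assignment of 3-element subsets of {1,...,7} to the vertices such that adjacent vertices receive disjoint sets. -/

import Mathlib

def triLattice : SimpleGraph (ℤ × ℤ) :=
  SimpleGraph.fromRel (fun p q =>
    q - p ∈ ({(1, 0), (-1, 0), (0, 1), (0, -1), (-1, 1), (1, -1)} : Set (ℤ × ℤ)))

/-!
By compactness it suffices to colour finite vertex sets, and these are coloured one row at a time,
from the bottom up. The colours of two consecutive vertices of a row are required to satisfy a
condition, `RowCompatible`, that depends on the gap between them and leaves room for the row above.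
To extend such a colouring by one more row, sweep the new row from left to right while keeping the
set of colours that are attainable at the current vertex large (`Rich`). What makes this possible is
that two disjoint triples miss only one element, so their overlaps with any third triple add up to
`2` or `3`; hence walks in the Kneser graph of the triples quickly reach almost all triples, and a
vertex far enough from its coloured neighbours is hardly constrained by them.
-/

open Finset

/-- The colours: three-element subsets of a seven-element set. -/
abbrev Triple : Type := {s : Finset (Fin 7) // #s = 3}

namespace Triple

/-- The number of common elements of two triples; triples of overlap `0` may be put on adjacent
vertices. -/
def overlap (p q : Triple) : ℕ := #(p.1 ∩ q.1)

/-- The triples with overlap `t` with `p`; `sphere p 0` is the neighbourhood of `p` in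
`oddGraph`. -/
def sphere (p : Triple) (t : ℕ) : Set Triple := {q | overlap p q = t}

variable {p q u v : Triple}

lemma overlap_comm (p q : Triple) : overlap p q = overlap q p := by
  rw [overlap, overlap, inter_comm]

@[simp] lemma overlap_self (p : Triple) : overlap p p = 3 := by
  rw [overlap, inter_self, p.2]

lemma overlap_le_three (p q : Triple) : overlap p q ≤ 3 :=
  (card_le_card inter_subset_left).trans_eq p.2

lemma overlap_eq_three_iff : overlap p q = 3 ↔ p = q := by
  refine ⟨fun h => ?_, fun h => h ▸ overlap_self p⟩
  have hp : p.1 ∩ q.1 = p.1 := eq_of_subset_of_card_le inter_subset_left (by rw [p.2]; exact h.ge)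
  have hq : p.1 ∩ q.1 = q.1 := eq_of_subset_of_card_le inter_subset_right (by rw [q.2]; exact h.ge)
  exact Subtype.ext (hp.symm.trans hq)

lemma overlap_le_two (h : p ≠ q) : overlap p q ≤ 2 :=
  Nat.le_of_lt_succ ((overlap_le_three p q).lt_of_ne (mt overlap_eq_three_iff.1 h))

/-- The Kneser graph of the triples, also known as the odd graph `O₄`: its homomorphisms are the
`(7, 3)`-colourings. -/
def oddGraph : SimpleGraph Triple where
  Adj p q := overlap p q = 0
  symm := ⟨fun p q h => (overlap_comm q p).trans h⟩
  loopless := ⟨fun p h => by simp at h⟩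

lemma card_sdiff_add_overlap (p q : Triple) : #(p.1 \ q.1) + overlap p q = 3 := by
  rw [overlap, card_sdiff_add_card_inter, p.2]

lemma card_compl_union (p q : Triple) : #(p.1 ∪ q.1)ᶜ = overlap p q + 1 := by
  have h := card_union_add_card_inter p.1 q.1
  rw [p.2, q.2] at h
  rw [card_compl, Fintype.card_fin, overlap]
  omega

lemma overlap_add_overlap_of_overlap_eq_zero (h : overlap p u = 0) (q : Triple) :
    overlap p q + overlap u q = 2 ∨ overlap p q + overlap u q = 3 := by
  have hpu : Disjoint p.1 u.1 := disjoint_iff_inter_eq_empty.2 (card_eq_zero.1 h)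
  have hcard : #(p.1 ∪ u.1) = 6 := by rw [card_union_of_disjoint hpu, p.2, u.2]
  have hsum : overlap p q + overlap u q = #((p.1 ∪ u.1) ∩ q.1) := by
    rw [union_inter_distrib_right, card_union_of_disjoint
      (hpu.mono inter_subset_left inter_subset_left), overlap, overlap]
  have hle : #((p.1 ∪ u.1) ∩ q.1) ≤ 3 := (card_le_card inter_subset_right).trans_eq q.2
  have hunion := card_union_add_card_inter (p.1 ∪ u.1) q.1
  have huniv := card_le_univ (p.1 ∪ u.1 ∪ q.1)
  rw [hcard, q.2] at hunion
  rw [Fintype.card_fin] at huniv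
  omega

lemma eq_of_two_common_neighbors (huv : u ≠ v) (hpu : overlap p u = 0) (hpv : overlap p v = 0)
    (hqu : overlap q u = 0) (hqv : overlap q v = 0) : p = q := by
  have hcard : #(u.1 ∪ v.1)ᶜ ≤ 3 := by
    rw [card_compl_union]
    exact Nat.succ_le_succ (overlap_le_two huv)
  have eq_compl {r : Triple} (hru : overlap r u = 0) (hrv : overlap r v = 0) :
      r.1 = (u.1 ∪ v.1)ᶜ := by
    refine eq_of_subset_of_card_le (subset_compl_iff_disjoint_right.2 ?_) (by rwa [r.2])
    exact disjoint_union_right.2 ⟨disjoint_iff_inter_eq_empty.2 (card_eq_zero.1 hru),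
      disjoint_iff_inter_eq_empty.2 (card_eq_zero.1 hrv)⟩
  exact Subtype.ext ((eq_compl hpu hpv).trans (eq_compl hqu hqv).symm)

/-- The neighbour of `q` in `oddGraph` that consists of the elements outside `q` other than `y`. -/
def neighbor (q : Triple) {y : Fin 7} (hy : y ∉ q.1) : Triple :=
  ⟨q.1ᶜ.erase y, by rw [card_erase_of_mem (mem_compl.2 hy), card_compl, q.2, Fintype.card_fin]⟩

section neighbor

variable {y z : Fin 7}

lemma overlap_neighbor (hy : y ∉ q.1) : overlap q (neighbor q hy) = 0 :=
  card_eq_zero.2 <| disjoint_iff_inter_eq_empty.1 <|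
    disjoint_compl_right.mono_right (erase_subset _ _)

lemma overlap_neighbor_eq_card_erase (hy : y ∉ q.1) :
    overlap p (neighbor q hy) = #((p.1 \ q.1).erase y) := by
  rw [overlap, neighbor, inter_erase, sdiff_eq_inter_compl]

lemma overlap_neighbor_of_mem (hy : y ∉ q.1) (hp : y ∈ p.1) :
    overlap p (neighbor q hy) + overlap p q = 2 := by
  have hcard := card_erase_add_one (mem_sdiff.2 ⟨hp, hy⟩)
  have hsdiff := card_sdiff_add_overlap p q
  rw [overlap_neighbor_eq_card_erase]
  omega

lemma overlap_neighbor_of_notMem (hy : y ∉ q.1) (hp : y ∉ p.1) :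
    overlap p (neighbor q hy) + overlap p q = 3 := by
  rw [overlap_neighbor_eq_card_erase, erase_eq_of_notMem (fun h => hp (mem_sdiff.1 h).1),
    card_sdiff_add_overlap]

lemma neighbor_ne (hy : y ∉ q.1) (hz : z ∉ q.1) (hyz : y ≠ z) : neighbor q hy ≠ neighbor q hz :=
  fun h => hyz (erase_injOn _ (mem_compl.2 hy) (mem_compl.2 hz) (congrArg Subtype.val h))

end neighbor

lemma nonempty_sphere_zero_inter_sphere {t : ℕ}
    (h : t + overlap p q = 2 ∨ t + overlap p q = 3) : (sphere q 0 ∩ sphere p t).Nonempty := by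
  rcases h with h | h
  · obtain ⟨y, hy⟩ := card_pos.1 (show 0 < #(p.1 \ q.1) by
      have := card_sdiff_add_overlap p q; omega)
    rw [mem_sdiff] at hy
    have := overlap_neighbor_of_mem hy.2 hy.1
    exact ⟨neighbor q hy.2, overlap_neighbor hy.2, show overlap _ _ = _ by omega⟩
  · obtain ⟨y, hy⟩ := card_pos.1 (show 0 < #(p.1 ∪ q.1)ᶜ by
      have := card_compl_union p q; omega)
    rw [mem_compl, mem_union, not_or] at hy
    have := overlap_neighbor_of_notMem hy.2 hy.1
    exact ⟨neighbor q hy.2, overlap_neighbor hy.2, show overlap _ _ = _ by omega⟩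

lemma nontrivial_sphere_zero_inter_sphere {t : ℕ}
    (h : overlap p q ≤ 1 ∧ t + overlap p q = 2 ∨ 1 ≤ overlap p q ∧ t + overlap p q = 3) :
    (sphere q 0 ∩ sphere p t).Nontrivial := by
  rcases h with ⟨hpq, h⟩ | ⟨hpq, h⟩
  · obtain ⟨y, hy, z, hz, hyz⟩ := one_lt_card.1 (show 1 < #(p.1 \ q.1) by
      have := card_sdiff_add_overlap p q; omega)
    rw [mem_sdiff] at hy hz
    have := overlap_neighbor_of_mem hy.2 hy.1
    have := overlap_neighbor_of_mem hz.2 hz.1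
    exact ⟨neighbor q hy.2, ⟨overlap_neighbor hy.2, show overlap _ _ = _ by omega⟩,
      neighbor q hz.2, ⟨overlap_neighbor hz.2, show overlap _ _ = _ by omega⟩,
      neighbor_ne hy.2 hz.2 hyz⟩
  · obtain ⟨y, hy, z, hz, hyz⟩ := one_lt_card.1 (show 1 < #(p.1 ∪ q.1)ᶜ by
      have := card_compl_union p q; omega)
    rw [mem_compl, mem_union, not_or] at hy hz
    have := overlap_neighbor_of_notMem hy.2 hy.1
    have := overlap_neighbor_of_notMem hz.2 hz.1
    exact ⟨neighbor q hy.2, ⟨overlap_neighbor hy.2, show overlap _ _ = _ by omega⟩,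
      neighbor q hz.2, ⟨overlap_neighbor hz.2, show overlap _ _ = _ by omega⟩,
      neighbor_ne hy.2 hz.2 hyz⟩

lemma nonempty_sphere_one_inter_sphere_one (e c : Triple) :
    (sphere e 1 ∩ sphere c 1).Nonempty := by
  have hcompl := card_compl_union e c
  suffices h : ∃ x y z, x ≠ y ∧ x ≠ z ∧ y ≠ z ∧ x ∈ e.1 ∧ y ∉ e.1 ∧ z ∉ e.1 ∧ z ∉ c.1 ∧
      (x ∈ c.1 ↔ y ∉ c.1) by
    obtain ⟨x, y, z, hxy, hxz, hyz, hxe, hye, hze, hzc, hc⟩ := h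
    refine ⟨⟨{x, y, z}, card_eq_three.2 ⟨x, y, z, hxy, hxz, hyz, rfl⟩⟩, ?_, ?_⟩
    · simp [sphere, overlap, inter_comm e.1, insert_inter_of_mem, insert_inter_of_notMem, *]
    · by_cases hyc : y ∈ c.1 <;>
        simp [sphere, overlap, inter_comm c.1, insert_inter_of_mem, insert_inter_of_notMem, hc, hyc,
          hzc]
  by_cases hdisj : overlap e c = 0
  · obtain ⟨z, hz⟩ := card_pos.1 (show 0 < #(e.1 ∪ c.1)ᶜ by omega)
    obtain ⟨x, hx⟩ := card_pos.1 (show 0 < #e.1 by rw [e.2]; exact three_pos)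
    obtain ⟨y, hy⟩ := card_pos.1 (show 0 < #c.1 by rw [c.2]; exact three_pos)
    rw [mem_compl, mem_union, not_or] at hz
    have hec := disjoint_left.1 (disjoint_iff_inter_eq_empty.2 (card_eq_zero.1 hdisj))
    exact ⟨x, y, z, by grind⟩
  · obtain ⟨x, hx⟩ := card_pos.1 (Nat.pos_of_ne_zero hdisj)
    obtain ⟨y, hy, z, hz, hyz⟩ := one_lt_card.1 (show 1 < #(e.1 ∪ c.1)ᶜ by omega)
    rw [mem_inter] at hx
    rw [mem_compl, mem_union, not_or] at hy hz
    exact ⟨x, y, z, by grind⟩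

lemma exists_mem_sphere_one_overlap_eq_zero {e v : Triple}
    (h : overlap e v = 1 ∨ overlap e v = 2) : ∃ u ∈ sphere e 1, overlap u v = 0 := by
  obtain ⟨u, hvu, heu⟩ :=
    nonempty_sphere_zero_inter_sphere (p := e) (q := v) (t := 1) (by omega)
  exact ⟨u, heu, overlap_comm v u ▸ hvu⟩

lemma nontrivial_sphere_zero_inter_sphere_one_union_sphere_two (hpq : p ≠ q) :
    (sphere q 0 ∩ (sphere p 1 ∪ sphere p 2)).Nontrivial := by
  have hle := overlap_le_two hpq
  obtain h | h : overlap p q = 0 ∨ 1 ≤ overlap p q := by omega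
  · exact (nontrivial_sphere_zero_inter_sphere (t := 2) (by omega)).mono
      (Set.inter_subset_inter_right _ Set.subset_union_right)
  · refine (nontrivial_sphere_zero_inter_sphere (p := p) (t := 3 - overlap p q) (by omega)).mono
      fun u hu => ⟨hu.1, ?_⟩
    have : overlap p u = _ := hu.2
    change overlap p u = 1 ∨ overlap p u = 2
    omega

lemma nontrivial_sphere_zero_sdiff_singleton (q s : Triple) : (sphere q 0 \ {s}).Nontrivial := by
  obtain rfl | hsq := eq_or_ne s q
  · refine (nontrivial_sphere_zero_inter_sphere (p := s) (q := s) (t := 0) (by simp)).mono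
      fun u hu => ⟨hu.1, ?_⟩
    rintro rfl
    simpa [sphere] using hu.1
  · refine (nontrivial_sphere_zero_inter_sphere_one_union_sphere_two hsq).mono
      fun u hu => ⟨hu.1, ?_⟩
    rintro rfl
    simpa [sphere] using hu.2

lemma exists_mem_sphere_zero_ne_overlap_eq_one (h : overlap p v = 1 ∨ overlap p v = 2)
    (m : Triple) : ∃ u ∈ sphere p 0 \ {m}, overlap u v = 1 := by
  rw [overlap_comm] at h
  obtain ⟨u, hu, hum⟩ :=
    (nontrivial_sphere_zero_inter_sphere (p := v) (q := p) (t := 1) (by omega)).exists_ne m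
  exact ⟨u, ⟨hu.1, hum⟩, overlap_comm v u ▸ hu.2⟩

lemma exists_two_le_overlap_le_one {c : Triple} (hpc : p ≠ c) :
    ∃ u, 2 ≤ overlap p u ∧ overlap u c ≤ 1 := by
  obtain h | h : overlap p c ≤ 1 ∨ overlap p c = 2 := by have := overlap_le_two hpc; omega
  · exact ⟨p, by simp, h⟩
  · rw [overlap_comm] at h
    obtain ⟨w, hpw, hcw : overlap c w = 1⟩ :=
      nonempty_sphere_zero_inter_sphere (p := c) (q := p) (t := 1) (by omega)
    obtain ⟨u, hwu : overlap w u = 0, hcu : overlap c u = 1⟩ :=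
      nonempty_sphere_zero_inter_sphere (p := c) (q := w) (t := 1) (by omega)
    have := overlap_add_overlap_of_overlap_eq_zero hpw u
    exact ⟨u, by omega, by rw [overlap_comm, hcu]⟩

lemma exists_two_le_overlap_eq_one_or_two (p c : Triple) :
    ∃ u, 2 ≤ overlap p u ∧ (overlap u c = 1 ∨ overlap u c = 2) := by
  have hle := overlap_le_three p c
  by_cases h : overlap p c = 1 ∨ overlap p c = 2
  · exact ⟨p, by simp, h⟩
  obtain ⟨t, t', ht, htt', ht'⟩ : ∃ t t', (t + overlap p c = 2 ∨ t + overlap p c = 3) ∧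
      (t' + t = 2 ∨ t' + t = 3) ∧ (t' = 1 ∨ t' = 2) := by
    obtain h0 | h3 : overlap p c = 0 ∨ overlap p c = 3 := by omega
    · exact ⟨2, 1, by omega⟩
    · exact ⟨0, 2, by omega⟩
  rw [overlap_comm] at ht
  obtain ⟨w, hpw, hcw : overlap c w = t⟩ := nonempty_sphere_zero_inter_sphere ht
  obtain ⟨u, hwu : overlap w u = 0, hcu : overlap c u = t'⟩ :=
    nonempty_sphere_zero_inter_sphere (hcw ▸ htt')
  have := overlap_add_overlap_of_overlap_eq_zero hpw u
  exact ⟨u, by omega, by rwa [overlap_comm, hcu]⟩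

lemma overlap_le_one_of_path (hpu : overlap p u = 0) (hpq : overlap p q = 0)
    (hqv : overlap q v = 0) : overlap u v ≤ 1 := by
  have hq := overlap_add_overlap_of_overlap_eq_zero hpq u
  have hv := overlap_add_overlap_of_overlap_eq_zero hqv u
  rw [overlap_comm v u] at hv
  omega

lemma overlap_eq_one_of_path (hpu : overlap p u = 0) (hpq : overlap p q = 0)
    (hqv : overlap q v = 0) (huq : u ≠ q) (hvp : v ≠ p) : overlap u v = 1 := by
  refine le_antisymm (overlap_le_one_of_path hpu hpq hqv) (Nat.pos_of_ne_zero fun huv => huq ?_)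
  exact eq_of_two_common_neighbors hvp huv (overlap_comm p u ▸ hpu) hqv (overlap_comm p q ▸ hpq)

lemma overlap_eq_one_or_two_of_two_neighbors (huv : u ≠ v) (hu : overlap p u = 0)
    (hv : overlap p v = 0) {c : Triple} (hc : c ≠ p) :
    (overlap u c = 1 ∨ overlap u c = 2) ∨ overlap v c = 1 ∨ overlap v c = 2 := by
  have huv2 := overlap_add_overlap_of_overlap_eq_zero hv u
  rw [hu, overlap_comm v u] at huv2
  have hle := overlap_le_two huv
  obtain rfl | huc := eq_or_ne u c
  · right; rw [overlap_comm]; omega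
  obtain rfl | hvc := eq_or_ne v c
  · omega
  have hne : ¬(overlap u c = 0 ∧ overlap v c = 0) := fun h => hc <|
    eq_of_two_common_neighbors huv (overlap_comm u c ▸ h.1) (overlap_comm v c ▸ h.2) hu hv
  have := overlap_le_two huc
  have := overlap_le_two hvc
  omega

/-- The overlaps of two triples joined by a walk of `n` steps in `oddGraph`. -/
def WalkOverlap : ℕ → ℕ → Prop
  | 0, k => k = 3
  | 1, k => k = 0
  | 2, k => 2 ≤ k
  | 3, k => k ≤ 1
  | 4, k => 1 ≤ k
  | 5, k => k ≠ 3
  | _ + 6, _ => True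

lemma walkOverlap_add_three_one (n : ℕ) : WalkOverlap (n + 3) 1 := by
  rcases n with _ | _ | _ | _ <;> simp [WalkOverlap]

lemma WalkOverlap.exists_neighbor {n : ℕ} {c : Triple} (h : WalkOverlap (n + 1) (overlap p c)) :
    ∃ u, WalkOverlap n (overlap p u) ∧ overlap u c = 0 := by
  have hle := overlap_le_three p c
  obtain ⟨t, ht, hwalk⟩ : ∃ t, (t + overlap p c = 2 ∨ t + overlap p c = 3) ∧ WalkOverlap n t := by
    rcases n with _ | _ | _ | _ | _ | _ | n <;> simp only [WalkOverlap, and_true] at h ⊢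
    · exact ⟨3 - overlap p c, by omega⟩
    · exact ⟨2 - overlap p c, by omega⟩
    · exact ⟨3 - overlap p c, by omega⟩
    · exact ⟨2 - overlap p c, by omega⟩
    · exact ⟨3 - overlap p c, by omega⟩
    · exact ⟨2 - overlap p c, by omega⟩
    · exact ⟨3 - overlap p c, by omega⟩
  obtain ⟨u, hcu, rfl⟩ := nonempty_sphere_zero_inter_sphere ht
  exact ⟨u, hwalk, overlap_comm c u ▸ hcu⟩

end Triple

namespace triLattice

open Triple

/-- The condition imposed on the colours `c`, `d` of two vertices at positions `z < w` that are
consecutive in their row, where `r'` is the row above. It is what makes it possible to colour `r'`;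
`one_le_overlap` is needed when both `z - 1` and `w` lie in `r'`. -/
structure RowCompatible (r' : Set ℤ) (z w : ℤ) (c d : Triple) : Prop where
  overlap_eq_zero : w = z + 1 → overlap c d = 0
  overlap_le_one : w = z + 2 → overlap c d ≤ 1
  one_le_overlap : w = z + 2 → z - 1 ∈ r' → w ∈ r' → 1 ≤ overlap c d
  overlap_eq_one_or_two : w = z + 3 → overlap c d = 1 ∨ overlap c d = 2
  ne : w = z + 4 → c ≠ d

namespace RowCompatible

variable {r' : Set ℤ} {z w : ℤ} {c d : Triple}

lemma of_succ (h : overlap c d = 0) : RowCompatible r' z (z + 1) c d := by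
  constructor <;> omega

lemma of_add_two (h : overlap c d ≤ 1) (hr : z - 1 ∈ r' → z + 2 ∉ r') :
    RowCompatible r' z (z + 2) c d := by
  constructor <;> first | omega | exact fun _ hz hw => absurd hw (hr hz)

lemma of_add_three (h : overlap c d = 1 ∨ overlap c d = 2) :
    RowCompatible r' z (z + 3) c d := by
  constructor <;> omega

lemma of_add_four_le (hzw : z + 4 ≤ w) (h : c ≠ d) : RowCompatible r' z w c d := by
  constructor <;> first | omega | exact fun _ => h

lemma of_overlap_eq_one (hzw : z + 2 ≤ w) (h : overlap c d = 1) : RowCompatible r' z w c d := by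
  have hne : c ≠ d := by rintro rfl; simp at h
  constructor <;> first | omega | exact fun _ => hne

lemma antitone {r : Set ℤ} (hr : r ⊆ r') (h : RowCompatible r' z w c d) :
    RowCompatible r z w c d :=
  ⟨h.1, h.2, fun hw hz hwr => h.3 hw (hr hz) (hr hwr), h.4, h.5⟩

lemma nontrivial_walkOverlap {n : ℕ} (h : RowCompatible r' z w c d) (hw : w = z + n + 2) :
    (sphere d 0 ∩ {u | WalkOverlap (n + 2) (overlap c u)}).Nontrivial := by
  have overlap_ne {u : Triple} (hu : u ≠ c) : overlap c u ≠ 3 :=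
    fun h => hu (overlap_eq_three_iff.1 h).symm
  rcases n with _ | _ | _ | _ | n
  · have := h.overlap_le_one (by omega)
    refine (nontrivial_sphere_zero_inter_sphere (p := c) (t := 2) (by omega)).mono
      fun u hu => ⟨hu.1, hu.2.ge⟩
  · have := h.overlap_eq_one_or_two (by omega)
    refine (nontrivial_sphere_zero_inter_sphere (p := c) (t := 1) (by omega)).mono
      fun u hu => ⟨hu.1, hu.2.le⟩
  · exact (nontrivial_sphere_zero_inter_sphere_one_union_sphere_two (h.ne (by omega))).mono
      fun u hu => ⟨hu.1, hu.2.elim (fun h : _ = 1 => h.ge) fun h : _ = 2 => (by omega : 1 ≤ _)⟩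
  · exact (nontrivial_sphere_zero_sdiff_singleton d c).mono fun u hu => ⟨hu.1, overlap_ne hu.2⟩
  · exact (nontrivial_sphere_zero_sdiff_singleton d c).mono fun u hu => ⟨hu.1, trivial⟩

end RowCompatible

/-- `z` and `w` are consecutive elements of `r`. -/
def AreConsecutive (r : Set ℤ) (z w : ℤ) : Prop :=
  z ∈ r ∧ w ∈ r ∧ z < w ∧ ∀ y ∈ Set.Ioo z w, y ∉ r

/-- A colouring of the row `r` from which the row `r'` above it can be coloured. -/
def IsRowColoring (r r' : Set ℤ) (f : ℤ → Triple) : Prop :=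
  ∀ ⦃z w⦄, AreConsecutive r z w → RowCompatible r' z w (f z) (f w)

namespace IsRowColoring

variable {r r' : Set ℤ} {f : ℤ → Triple} {w x y z : ℤ}

lemma overlap_eq_zero (hf : IsRowColoring r r' f) (hz : z ∈ r) (hw : w ∈ r)
    (hzw : w = z + 1 := by omega) : overlap (f z) (f w) = 0 := by
  refine (hf ⟨hz, hw, by omega, fun t ht => ?_⟩).overlap_eq_zero hzw
  rw [Set.mem_Ioo] at ht
  omega

lemma rowCompatible_add_two (hf : IsRowColoring r r' f) (hz : z ∈ r) (hy : y ∉ r) (hw : w ∈ r)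
    (hzy : y = z + 1 := by omega) (hzw : w = z + 2 := by omega) :
    RowCompatible r' z w (f z) (f w) := by
  refine hf ⟨hz, hw, by omega, fun t ht => ?_⟩
  rw [Set.mem_Ioo] at ht
  rwa [show t = y by omega]

lemma overlap_eq_one_or_two (hf : IsRowColoring r r' f) (hz : z ∈ r) (hx : x ∉ r) (hy : y ∉ r)
    (hw : w ∈ r) (hzx : x = z + 1 := by omega) (hzy : y = z + 2 := by omega)
    (hzw : w = z + 3 := by omega) : overlap (f z) (f w) = 1 ∨ overlap (f z) (f w) = 2 := by
  refine (hf ⟨hz, hw, by omega, fun t ht => ?_⟩).overlap_eq_one_or_two hzw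
  rw [Set.mem_Ioo] at ht
  obtain rfl | rfl : t = x ∨ t = y := by omega
  exacts [hx, hy]

lemma antitone {s : Set ℤ} (hf : IsRowColoring r r' f) (hs : s ⊆ r') : IsRowColoring r s f :=
  fun _ _ hzw => (hf hzw).antitone hs

end IsRowColoring

/-- The triples that may be given to position `x` of a row, when the row `r` below it is coloured
by `f`: the neighbours of `(x, y + 1)` in the row below are `(x, y)` and `(x + 1, y)`. -/
def admissible (r : Set ℤ) (f : ℤ → Triple) (x : ℤ) : Set Triple :=
  {c | (x ∈ r → overlap (f x) c = 0) ∧ (x + 1 ∈ r → overlap (f (x + 1)) c = 0)}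

/-- `g` colours the row `r₁`, between the row `r₀` coloured by `f` and the row `r₂`. -/
structure IsRowExtension (r₀ r₁ r₂ : Set ℤ) (f g : ℤ → Triple) : Prop where
  isRowColoring : IsRowColoring r₁ r₂ g
  mem_admissible : ∀ x ∈ r₁, g x ∈ admissible r₀ f x

/-- No triangle has its vertices in the row `r` and in the row `r'` above it. -/
structure NoTriangles (r r' : Set ℤ) : Prop where
  upward : ∀ ⦃x⦄, x ∈ r → x + 1 ∈ r → x ∉ r'
  downward : ∀ ⦃x⦄, x + 1 ∈ r → x ∈ r' → x + 1 ∉ r'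

lemma NoTriangles.mono {r r' s s' : Set ℤ} (h : NoTriangles r r') (hs : s ⊆ r) (hs' : s' ⊆ r') :
    NoTriangles s s' :=
  ⟨fun _ hx hy hx' => h.upward (hs hx) (hs hy) (hs' hx'),
    fun _ hx hy hx' => h.downward (hs hx) (hs' hy) (hs' hx')⟩

/-- The triples that position `a` may receive when the preceding position `b` of the row receives
one of the triples in `S`. -/
def followers (r' : Set ℤ) (b a : ℤ) (S : Set Triple) : Set Triple :=
  {c | ∃ u ∈ S, RowCompatible r' b a u c}

/-- The triples that position `x` receives in the colourings of the row `r₁`. -/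
def attainable (r₀ r₁ r₂ : Set ℤ) (f : ℤ → Triple) (x : ℤ) : Set Triple :=
  {c | ∃ g, IsRowExtension r₀ r₁ r₂ f g ∧ g x = c}

/-- The invariant of the sweep along a row between `r₀`, coloured by `f`, and `r₂`: the set `S` of
triples attainable at position `x` is large. In the case `trail`, `z` is the last vertex of `r₀`
before `x`, and the whole segment of the new row from `z` to `x` has been coloured as a walk that
starts next to `f z`. -/
inductive Rich (r₀ r₂ : Set ℤ) (f : ℤ → Triple) (S : Set Triple) (x : ℤ) : Prop
  | right (hx : x + 1 ∈ r₀) (hS : (sphere (f (x + 1)) 0 ∩ S).Nontrivial)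
  | below (hx : x ∈ r₀) (m : Triple) (hS : sphere (f x) 0 \ {m} ⊆ S)
      (hS' : x ∉ r₂ → sphere (f x) 0 ⊆ S)
  | trail (n : ℕ) (z : ℤ) (hz : z ∈ r₀) (hzx : x = z + n + 1)
      (hgap : ∀ y ∈ Set.Ioc z (x + 1), y ∉ r₀) (hr₂ : z ∉ r₂)
      (hS : {c | WalkOverlap (n + 2) (overlap (f z) c)} ⊆ S)
  | free (hS : {e | sphere e 1 ⊆ S}.Nontrivial)

variable {r₀ r₁ r₂ : Set ℤ} {f : ℤ → Triple} {S T : Set Triple} {a b x : ℤ}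

lemma Rich.mono (h : Rich r₀ r₂ f S x) (hST : S ⊆ T) : Rich r₀ r₂ f T x := by
  cases h with
  | right hx hS => exact .right hx (hS.mono (Set.inter_subset_inter_right _ hST))
  | below hx m hS hS' => exact .below hx m (hS.trans hST) fun h => (hS' h).trans hST
  | trail n z hz hzx hgap hr₂ hS => exact .trail n z hz hzx hgap hr₂ (hS.trans hST)
  | free hS => exact .free (hS.mono fun e he => he.trans hST)

lemma rich_inter_admissible (hr₀ : a ∈ r₀ → a + 1 ∉ r₀)
    (hbelow : a ∈ r₀ → ∃ m, sphere (f a) 0 \ {m} ⊆ T ∧ (a ∉ r₂ → sphere (f a) 0 ⊆ T))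
    (hright : a ∉ r₀ → a + 1 ∈ r₀ → (sphere (f (a + 1)) 0 ∩ T).Nontrivial)
    (hfree : a ∉ r₀ → a + 1 ∉ r₀ → {e | sphere e 1 ⊆ T}.Nontrivial) :
    Rich r₀ r₂ f (T ∩ admissible r₀ f a) a := by
  by_cases ha : a ∈ r₀
  · obtain ⟨m, hm, hm'⟩ := hbelow ha
    have hadm : sphere (f a) 0 ⊆ admissible r₀ f a :=
      fun c hc => ⟨fun _ => hc, fun h => absurd h (hr₀ ha)⟩
    exact .below ha m (Set.subset_inter hm (Set.sdiff_subset.trans hadm))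
      fun h => Set.subset_inter (hm' h) hadm
  by_cases ha' : a + 1 ∈ r₀
  · exact .right ha' ((hright ha ha').mono fun c hc =>
      ⟨hc.1, hc.2, fun h => absurd h ha, fun _ => hc.1⟩)
  · exact .free ((hfree ha ha').mono fun e he c hc =>
      ⟨he hc, fun h => absurd h ha, fun h => absurd h ha'⟩)

lemma rich_of_compl_singleton_subset {s : Triple} (hr₀ : a ∈ r₀ → a + 1 ∉ r₀) (hT : {s}ᶜ ⊆ T)
    (hs : a ∈ r₀ → overlap s (f a) ≠ 0) : Rich r₀ r₂ f (T ∩ admissible r₀ f a) a := by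
  refine rich_inter_admissible hr₀ (fun ha => ?_) (fun _ _ => ?_) fun _ _ => ?_
  · have hsub : sphere (f a) 0 ⊆ T := fun c hc => hT <| by
      rintro rfl
      exact hs ha (overlap_comm c (f a) ▸ hc)
    exact ⟨s, Set.sdiff_subset.trans hsub, fun _ => hsub⟩
  · exact (nontrivial_sphere_zero_sdiff_singleton _ s).mono fun c hc => ⟨hc.1, hT hc.2⟩
  · have subset_of_ne_one {e : Triple} (he : overlap e s ≠ 1) : sphere e 1 ⊆ T := fun c hc =>
      hT fun hcs : c = s => he (hcs ▸ hc)
    obtain ⟨e, he, hes⟩ := (nontrivial_sphere_zero_sdiff_singleton s s).nonempty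
    have hes' : overlap e s = 0 := overlap_comm e s ▸ he
    exact ⟨s, subset_of_ne_one (by simp), e, subset_of_ne_one (by simp [hes']), Ne.symm hes⟩

lemma rich_of_forall_mem (hr₀ : a ∈ r₀ → a + 1 ∉ r₀) (hT : ∀ c, c ∈ T) :
    Rich r₀ r₂ f (T ∩ admissible r₀ f a) a :=
  rich_of_compl_singleton_subset (s := f a) hr₀ (fun c _ => hT c) (by simp)

lemma rich_of_walkOverlap_subset {n : ℕ} {z : ℤ} (hf : IsRowColoring r₀ r₁ f) (hz : z ∈ r₀)
    (ha : a = z + n + 1) (hgap : ∀ y ∈ Set.Ioc z a, y ∉ r₀) (hr₂ : z ∉ r₂)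
    (hT : {c | WalkOverlap (n + 2) (overlap (f z) c)} ⊆ T) :
    Rich r₀ r₂ f (T ∩ admissible r₀ f a) a := by
  have ha₀ : a ∉ r₀ := hgap a ⟨by omega, le_rfl⟩
  by_cases ha' : a + 1 ∈ r₀
  · have hcompat : RowCompatible r₁ z (a + 1) (f z) (f (a + 1)) :=
      hf ⟨hz, ha', by omega, fun y hy => hgap y ⟨hy.1, by have := hy.2; omega⟩⟩
    exact .right ha' ((hcompat.nontrivial_walkOverlap (by omega)).mono fun c hc =>
      ⟨hc.1, hT hc.2, fun h => absurd h ha₀, fun _ => hc.1⟩)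
  · refine .trail n z hz ha (fun y hy => ?_) hr₂ fun c hc =>
      ⟨hT hc, fun h => absurd h ha₀, fun h => absurd h ha'⟩
    obtain rfl | hya := eq_or_ne y (a + 1)
    · exact ha'
    · exact hgap y ⟨hy.1, by have := hy.2; omega⟩

lemma mem_followers_succ {u c : Triple} (hu : u ∈ S) (huc : overlap u c = 0) :
    c ∈ followers r₂ b (b + 1) S :=
  ⟨u, hu, .of_succ huc⟩

lemma Rich.succ (hS : Rich r₀ r₂ f S b) (hf : IsRowColoring r₀ r₁ f) (hb₀ : b + 1 ∉ r₀)
    (hb₂ : b ∉ r₂) :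
    Rich r₀ r₂ f (followers r₂ b (b + 1) S ∩ admissible r₀ f (b + 1)) (b + 1) := by
  cases hS with
  | right hx _ => exact absurd hx hb₀
  | below hx m _ hS =>
    refine rich_of_walkOverlap_subset (n := 0) hf hx (by simp) (fun y hy => ?_) hb₂ fun c hc => ?_
    · obtain rfl : y = b + 1 := le_antisymm hy.2 hy.1
      exact hb₀
    · obtain ⟨u, hu, huc⟩ := WalkOverlap.exists_neighbor (p := f b) (n := 1) hc
      exact mem_followers_succ (hS hb₂ hu) huc
  | trail n z hz hbz hgap hz₂ hS =>
    refine rich_of_walkOverlap_subset (n := n + 1) hf hz (by push_cast; omega) hgap hz₂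
      fun c hc => ?_
    obtain ⟨u, hu, huc⟩ := WalkOverlap.exists_neighbor hc
    exact mem_followers_succ (hS hu) huc
  | free hS =>
    refine rich_inter_admissible (fun h => absurd h hb₀) (fun h => absurd h hb₀)
      (fun _ _ => ?_) fun _ _ => ?_
    · obtain ⟨e, he, hne⟩ := hS.exists_ne (f (b + 1 + 1))
      refine (nontrivial_sphere_zero_inter_sphere_one_union_sphere_two hne).mono
        fun c hc => ⟨hc.1, ?_⟩
      obtain ⟨u, hu, huc⟩ := exists_mem_sphere_one_overlap_eq_zero hc.2
      exact mem_followers_succ (he hu) huc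
    · refine hS.mono fun e he c hc => ?_
      obtain ⟨u, hu, huc⟩ := exists_mem_sphere_one_overlap_eq_zero (.inl hc)
      exact mem_followers_succ (he hu) huc

lemma mem_followers_of_sphere_one_subset {e : Triple} (he : sphere e 1 ⊆ S) (hab : b + 2 ≤ a)
    (c : Triple) : c ∈ followers r₂ b a S := by
  obtain ⟨u, heu, hcu⟩ := nonempty_sphere_one_inter_sphere_one e c
  exact ⟨u, he heu, .of_overlap_eq_one hab (overlap_comm c u ▸ hcu)⟩

lemma mem_followers_of_nontrivial (hS : S.Nontrivial) (hab : b + 4 ≤ a) (c : Triple) :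
    c ∈ followers r₂ b a S := by
  obtain ⟨u, hu, huc⟩ := hS.exists_ne c
  exact ⟨u, hu, .of_add_four_le hab huc⟩

lemma nontrivial_setOf_sphere_one_subset_followers (hS : S.Nontrivial) (hab : b + 2 ≤ a) :
    {e | sphere e 1 ⊆ followers r₂ b a S}.Nontrivial :=
  hS.mono fun u hu _ hc => ⟨u, hu, .of_overlap_eq_one hab hc⟩

section TwoNeighbors

variable {p q : Triple} (hS : (sphere p 0 ∩ S).Nontrivial)
include hS

lemma compl_singleton_subset_followers_add_three : {p}ᶜ ⊆ followers r₂ b (b + 3) S := by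
  obtain ⟨u, hu, v, hv, huv⟩ := hS
  intro c hc
  rcases overlap_eq_one_or_two_of_two_neighbors huv hu.1 hv.1 hc with h | h
  · exact ⟨u, hu.2, .of_add_three h⟩
  · exact ⟨v, hv.2, .of_add_three h⟩

lemma sphere_sdiff_subset_followers_add_two (hpq : overlap p q = 0) :
    sphere q 0 \ {p} ⊆ followers r₂ b (b + 2) S := by
  obtain ⟨u, hu, huq⟩ := hS.exists_ne q
  exact fun c hc => ⟨u, hu.2, .of_overlap_eq_one le_rfl
    (overlap_eq_one_of_path hu.1 hpq hc.1 huq hc.2)⟩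

lemma sphere_subset_followers_add_two (hpq : overlap p q = 0) (hr₂ : b + 2 ∉ r₂) :
    sphere q 0 ⊆ followers r₂ b (b + 2) S := by
  obtain ⟨u, hu⟩ := hS.nonempty
  exact fun c hc => ⟨u, hu.2, .of_add_two (overlap_le_one_of_path hu.1 hpq hc) fun _ => hr₂⟩

lemma nontrivial_sphere_inter_followers_add_two (hpq : overlap p q ≤ 1) :
    (sphere q 0 ∩ followers r₂ b (b + 2) S).Nontrivial := by
  obtain h0 | h1 : overlap p q = 0 ∨ overlap p q = 1 := by omega
  · exact (nontrivial_sphere_zero_sdiff_singleton q p).mono fun c hc =>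
      ⟨hc.1, sphere_sdiff_subset_followers_add_two hS h0 hc⟩
  · obtain ⟨u, hpu, hu⟩ := hS.nonempty
    have huq := overlap_add_overlap_of_overlap_eq_zero hpu q
    exact (nontrivial_sphere_zero_inter_sphere (p := u) (q := q) (t := 1) (by omega)).mono
      fun c hc => ⟨hc.1, u, hu, .of_overlap_eq_one le_rfl hc.2⟩

end TwoNeighbors

lemma nontrivial_sphere_inter_of_sdiff_singleton_subset {p m : Triple}
    (hS : sphere p 0 \ {m} ⊆ S) : (sphere p 0 ∩ S).Nontrivial :=
  (nontrivial_sphere_zero_sdiff_singleton p m).mono fun _ hc => ⟨hc.1, hS hc⟩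

lemma rich_followers_add_two_of_below (hf : IsRowColoring r₀ r₁ f)
    (hr₀ : b + 2 ∈ r₀ → b + 2 + 1 ∉ r₀) (hx : b ∈ r₀) (hb₀ : b + 1 ∉ r₀) {m : Triple}
    (hS : sphere (f b) 0 \ {m} ⊆ S) :
    Rich r₀ r₂ f (followers r₂ b (b + 2) S ∩ admissible r₀ f (b + 2)) (b + 2) := by
  have hS₂ := nontrivial_sphere_inter_of_sdiff_singleton_subset hS
  have mem_followers {c : Triple} (hc : overlap (f b) c = 1 ∨ overlap (f b) c = 2) :
      c ∈ followers r₂ b (b + 2) S := by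
    obtain ⟨u, hu, huc⟩ := exists_mem_sphere_zero_ne_overlap_eq_one hc m
    exact ⟨u, hS hu, .of_overlap_eq_one le_rfl huc⟩
  refine rich_inter_admissible hr₀ (fun hq => ?_) (fun hy hq => ?_) fun _ _ => ?_
  · have hpq := (hf.rowCompatible_add_two hx hb₀ hq).overlap_le_one rfl
    obtain h0 | h1 : overlap (f b) (f (b + 2)) = 0 ∨ overlap (f b) (f (b + 2)) = 1 := by omega
    · exact ⟨_, sphere_sdiff_subset_followers_add_two hS₂ h0,
        sphere_subset_followers_add_two hS₂ h0⟩
    · have hfull : sphere (f (b + 2)) 0 ⊆ followers r₂ b (b + 2) S := fun c hc => by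
        have := overlap_add_overlap_of_overlap_eq_zero hc (f b)
        rw [overlap_comm _ (f b), overlap_comm _ (f b)] at this
        exact mem_followers (by omega)
      exact ⟨m, Set.sdiff_subset.trans hfull, fun _ => hfull⟩
  · have hpq : f b ≠ f (b + 2 + 1) := fun h => by
      have := hf.overlap_eq_one_or_two hx hb₀ hy hq
      simp [← h] at this
    exact (nontrivial_sphere_zero_inter_sphere_one_union_sphere_two hpq).mono fun c hc =>
      ⟨hc.1, mem_followers hc.2⟩
  · exact nontrivial_setOf_sphere_one_subset_followers (hS₂.mono Set.inter_subset_right) le_rfl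

section Jump

variable (h₀₁ : NoTriangles r₀ r₁) (hf : IsRowColoring r₀ r₁ f) (hb : b ∈ r₁) (ha : a ∈ r₁)
  (hab : b + 2 ≤ a)
include h₀₁ hf hb ha hab

lemma rich_followers_of_right (hx : b + 1 ∈ r₀) (hS : (sphere (f (b + 1)) 0 ∩ S).Nontrivial) :
    Rich r₀ r₂ f (followers r₂ b a S ∩ admissible r₀ f a) a := by
  have hr₀ : a ∈ r₀ → a + 1 ∉ r₀ := fun h h' => h₀₁.upward h h' ha
  obtain rfl | rfl | hab : a = b + 2 ∨ a = b + 3 ∨ b + 4 ≤ a := by omega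
  · refine rich_inter_admissible hr₀ (fun hq => ?_) (fun hy hq => ?_) fun _ _ => ?_
    · have hpq := hf.overlap_eq_zero hx hq
      exact ⟨_, sphere_sdiff_subset_followers_add_two hS hpq,
        sphere_subset_followers_add_two hS hpq⟩
    · have hpq := (hf.rowCompatible_add_two hx hy hq).overlap_le_one (by omega)
      exact nontrivial_sphere_inter_followers_add_two hS hpq
    · exact nontrivial_setOf_sphere_one_subset_followers (hS.mono Set.inter_subset_right) le_rfl
  · refine rich_of_compl_singleton_subset hr₀ (compl_singleton_subset_followers_add_three hS)
      fun hq => ?_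
    by_cases hy : b + 2 ∈ r₀
    · have hpy := hf.overlap_eq_zero hx hy
      have hyq := hf.overlap_eq_zero hy hq
      have := overlap_add_overlap_of_overlap_eq_zero hpy (f (b + 3))
      omega
    · exact Nat.one_le_iff_ne_zero.1
        ((hf.rowCompatible_add_two hx hy hq).one_le_overlap (by omega) (by simpa using hb) ha)
  · exact rich_of_forall_mem hr₀ (mem_followers_of_nontrivial (hS.mono Set.inter_subset_right) hab)

lemma rich_followers_of_below (hx : b ∈ r₀) {m : Triple} (hS : sphere (f b) 0 \ {m} ⊆ S) :
    Rich r₀ r₂ f (followers r₂ b a S ∩ admissible r₀ f a) a := by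
  have hr₀ : a ∈ r₀ → a + 1 ∉ r₀ := fun h h' => h₀₁.upward h h' ha
  have hb₀ : b + 1 ∉ r₀ := fun h => h₀₁.upward hx h hb
  have hS₂ := nontrivial_sphere_inter_of_sdiff_singleton_subset hS
  obtain rfl | rfl | hab : a = b + 2 ∨ a = b + 3 ∨ b + 4 ≤ a := by omega
  · exact rich_followers_add_two_of_below hf hr₀ hx hb₀ hS
  · refine rich_of_compl_singleton_subset hr₀ (compl_singleton_subset_followers_add_three hS₂)
      fun hq => ?_
    by_cases hy : b + 2 ∈ r₀
    · have hpy := (hf.rowCompatible_add_two hx hb₀ hy).overlap_le_one rfl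
      have hyq := overlap_add_overlap_of_overlap_eq_zero (hf.overlap_eq_zero hy hq) (f b)
      rw [overlap_comm _ (f b), overlap_comm _ (f b)] at hyq
      omega
    · have := hf.overlap_eq_one_or_two hx hb₀ hy hq
      omega
  · exact rich_of_forall_mem hr₀ (mem_followers_of_nontrivial (hS₂.mono Set.inter_subset_right) hab)

omit hb in
lemma rich_followers_of_trail {n : ℕ} {z : ℤ} (hz : z ∈ r₀) (hbz : b = z + n + 1)
    (hgap : ∀ y ∈ Set.Ioc z (b + 1), y ∉ r₀) (hz₂ : z ∉ r₂)
    (hS : {c | WalkOverlap (n + 2) (overlap (f z) c)} ⊆ S) :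
    Rich r₀ r₂ f (followers r₂ b a S ∩ admissible r₀ f a) a := by
  have hr₀ : a ∈ r₀ → a + 1 ∉ r₀ := fun h h' => h₀₁.upward h h' ha
  obtain _ | n := n
  · obtain rfl : z = b - 1 := by omega
    obtain rfl | hab : a = b + 2 ∨ b + 3 ≤ a := by omega
    · refine rich_of_compl_singleton_subset hr₀ (s := f (b - 1)) (fun c hc => ?_) fun hq => ?_
      · obtain ⟨u, hu, huc⟩ := exists_two_le_overlap_le_one (Ne.symm hc)
        exact ⟨u, hS hu, .of_add_two huc fun h => absurd h hz₂⟩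
      · have := hf.overlap_eq_one_or_two hz (hgap b (by simp)) (hgap (b + 1) (by simp)) hq
        omega
    · refine rich_of_forall_mem hr₀ fun c => ?_
      obtain ⟨u, hu, huc⟩ := exists_two_le_overlap_eq_one_or_two (f (b - 1)) c
      have hne : u ≠ c := by rintro rfl; simp at huc
      obtain rfl | hab : a = b + 3 ∨ b + 4 ≤ a := by omega
      · exact ⟨u, hS hu, .of_add_three huc⟩
      · exact ⟨u, hS hu, .of_add_four_le hab hne⟩
  · refine rich_of_forall_mem hr₀ (mem_followers_of_sphere_one_subset (e := f z) ?_ hab)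
    rintro c (hc : overlap (f z) c = 1)
    exact hS (show WalkOverlap (n + 3) _ from hc ▸ walkOverlap_add_three_one n)

lemma Rich.jump (hS : Rich r₀ r₂ f S b) :
    Rich r₀ r₂ f (followers r₂ b a S ∩ admissible r₀ f a) a := by
  cases hS with
  | right hx hS => exact rich_followers_of_right h₀₁ hf hb ha hab hx hS
  | below hx m hS _ => exact rich_followers_of_below h₀₁ hf hb ha hab hx hS
  | trail n z hz hbz hgap hz₂ hS => exact rich_followers_of_trail h₀₁ hf ha hab hz hbz hgap hz₂ hS
  | free hS =>
    obtain ⟨e, he⟩ := hS.nonempty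
    exact rich_of_forall_mem (fun h h' => h₀₁.upward h h' ha)
      (mem_followers_of_sphere_one_subset he hab)

end Jump

lemma Rich.followers_inter_admissible (h₀₁ : NoTriangles r₀ r₁) (h₁₂ : NoTriangles r₁ r₂)
    (hf : IsRowColoring r₀ r₁ f) (hb : b ∈ r₁) (ha : a ∈ r₁) (hba : b < a)
    (hS : Rich r₀ r₂ f S b) : Rich r₀ r₂ f (followers r₂ b a S ∩ admissible r₀ f a) a := by
  obtain rfl | hab : a = b + 1 ∨ b + 2 ≤ a := by omega
  · exact hS.succ hf (fun h => h₀₁.downward h hb ha) (h₁₂.upward hb ha)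
  · exact hS.jump h₀₁ hf hb ha hab

lemma Rich.nonempty (hS : Rich r₀ r₂ f S x) : S.Nonempty := by
  cases hS with
  | right _ hS => exact hS.nonempty.mono Set.inter_subset_right
  | below _ m hS _ => exact (nontrivial_sphere_zero_sdiff_singleton _ m).nonempty.mono hS
  | trail n z _ _ _ _ hS =>
    obtain _ | n := n
    · exact ⟨f z, hS (by simp [WalkOverlap])⟩
    · obtain ⟨u, hu : overlap (f z) u = 1, -⟩ := nonempty_sphere_one_inter_sphere_one (f z) (f z)
      exact ⟨u, hS (show WalkOverlap (n + 3) _ from hu ▸ walkOverlap_add_three_one n)⟩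
  | free hS =>
    obtain ⟨e, he⟩ := hS.nonempty
    exact (nonempty_sphere_one_inter_sphere_one e e).mono (Set.inter_subset_left.trans he)

lemma IsRowExtension.update_insert {g : ℤ → Triple} {c : Triple}
    (hg : IsRowExtension r₀ r₁ r₂ f g) (hb : IsGreatest r₁ b) (hba : b < a)
    (hc : RowCompatible r₂ b a (g b) c) (hadm : c ∈ admissible r₀ f a) :
    IsRowExtension r₀ (insert a r₁) r₂ f (Function.update g a c) := by
  have lt_of_mem {x : ℤ} (hx : x ∈ r₁) : x < a := (hb.2 hx).trans_lt hba
  refine ⟨fun z w ⟨hz, hw, hzw, hgap⟩ => ?_, ?_⟩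
  · have hza : z < a := by
      rcases hw with rfl | hw
      exacts [hzw, hzw.trans (lt_of_mem hw)]
    replace hz : z ∈ r₁ := hz.resolve_left hza.ne
    rw [Function.update_of_ne hza.ne]
    rcases hw with rfl | hw
    · obtain rfl : z = b := (hb.2 hz).eq_of_not_lt fun h => hgap b ⟨h, hba⟩ (.inr hb.1)
      rwa [Function.update_self]
    · rw [Function.update_of_ne (lt_of_mem hw).ne]
      exact hg.isRowColoring ⟨hz, hw, hzw, fun y hy h => hgap y hy (.inr h)⟩
  · rintro x (rfl | hx)
    · rwa [Function.update_self]
    · rw [Function.update_of_ne (lt_of_mem hx).ne]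
      exact hg.mem_admissible x hx

lemma followers_inter_admissible_subset_attainable_insert (hb : IsGreatest r₁ b) (hba : b < a) :
    followers r₂ b a (attainable r₀ r₁ r₂ f b) ∩ admissible r₀ f a ⊆
      attainable r₀ (insert a r₁) r₂ f a := by
  rintro c ⟨⟨_, ⟨g, hg, rfl⟩, hc⟩, hadm⟩
  exact ⟨_, hg.update_insert hb hba hc hadm, Function.update_self ..⟩

lemma admissible_subset_attainable_singleton : admissible r₀ f a ⊆ attainable r₀ {a} r₂ f a := by
  refine fun c hc => ⟨fun _ => c, ⟨?_, ?_⟩, rfl⟩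
  · rintro z w ⟨rfl, rfl, hzw, -⟩
    exact absurd hzw (lt_irrefl _)
  · rintro x rfl
    exact hc

lemma rich_attainable (s : Finset ℤ) (h₀₁ : NoTriangles r₀ s) (h₁₂ : NoTriangles s r₂)
    (hf : IsRowColoring r₀ s f) (ha : IsGreatest (s : Set ℤ) a) :
    Rich r₀ r₂ f (attainable r₀ s r₂ f a) a := by
  induction s using Finset.induction_on_max generalizing a with
  | empty => exact absurd ha.1 (notMem_empty a)
  | insert m s hm ih =>
    rw [coe_insert] at *
    have hs : (s : Set ℤ) ⊆ insert m s := Set.subset_insert _ _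
    obtain rfl : a = m := ha.unique
      ⟨Set.mem_insert _ _, Set.forall_mem_insert.2 ⟨le_rfl, fun x hx => (hm x hx).le⟩⟩
    obtain rfl | hne := s.eq_empty_or_nonempty
    · rw [coe_empty, insert_empty_eq]
      exact (rich_of_forall_mem (fun h h' => h₀₁.upward h h' ha.1) Set.mem_univ).mono
        (Set.inter_subset_right.trans admissible_subset_attainable_singleton)
    · have hb := s.isGreatest_max' hne
      have hba := hm _ hb.1
      exact ((ih (h₀₁.mono subset_rfl hs) (h₁₂.mono hs subset_rfl) (hf.antitone hs)
        hb).followers_inter_admissible h₀₁ h₁₂ hf (hs hb.1) ha.1 hba).mono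
          (followers_inter_admissible_subset_attainable_insert hb hba)

lemma exists_isRowExtension (hr₁ : r₁.Finite) (h₀₁ : NoTriangles r₀ r₁) (h₁₂ : NoTriangles r₁ r₂)
    (hf : IsRowColoring r₀ r₁ f) : ∃ g, IsRowExtension r₀ r₁ r₂ f g := by
  lift r₁ to Finset ℤ using hr₁
  obtain rfl | hne := r₁.eq_empty_or_nonempty
  · exact ⟨f, fun z w h => absurd h.1 (notMem_empty z), fun x hx => absurd hx (notMem_empty x)⟩
  · obtain ⟨_, g, hg, -⟩ :=
      (rich_attainable r₁ h₀₁ h₁₂ hf (r₁.isGreatest_max' hne)).nonempty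
    exact ⟨g, hg⟩

lemma exists_row_colorings {r : ℕ → Set ℤ} (hfin : ∀ n, (r n).Finite)
    (hr : ∀ n, NoTriangles (r n) (r (n + 1))) :
    ∃ F : ℕ → ℤ → Triple, (∀ n, IsRowColoring (r n) (r (n + 1)) (F n)) ∧
      ∀ n, ∀ x ∈ r (n + 1), F (n + 1) x ∈ admissible (r n) (F n) x := by
  have hstep (n : ℕ) (f : {f // IsRowColoring (r n) (r (n + 1)) f}) :
      ∃ g, IsRowExtension (r n) (r (n + 1)) (r (n + 2)) f g :=
    exists_isRowExtension (hfin _) (hr n) (hr (n + 1)) f.2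
  choose next hnext using hstep
  obtain ⟨f₀, hf₀⟩ : ∃ f, IsRowExtension ∅ (r 0) (r 1) (fun _ => ⟨{0, 1, 2}, rfl⟩) f :=
    exists_isRowExtension (hfin 0) ⟨fun x hx => absurd hx (Set.notMem_empty x),
      fun x hx => absurd hx (Set.notMem_empty _)⟩ (hr 0)
      fun z w h => absurd h.1 (Set.notMem_empty z)
  let F (n : ℕ) : {f // IsRowColoring (r n) (r (n + 1)) f} :=
    n.rec ⟨f₀, hf₀.isRowColoring⟩ fun n f => ⟨next n f, (hnext n f).isRowColoring⟩
  exact ⟨fun n => (F n).1, fun n => (F n).2, fun n => (hnext n (F n)).mem_admissible⟩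

lemma adj_right (x y : ℤ) : triLattice.Adj (x, y) (x + 1, y) := by
  simp [triLattice]

lemma adj_up (x y : ℤ) : triLattice.Adj (x, y) (x, y + 1) := by
  simp [triLattice]

lemma adj_diag (x y : ℤ) : triLattice.Adj (x + 1, y) (x, y + 1) := by
  simp [triLattice]

lemma adj_induction {P : ℤ × ℤ → ℤ × ℤ → Prop} (symm : ∀ p q, P p q → P q p)
    (right : ∀ x y, P (x, y) (x + 1, y)) (up : ∀ x y, P (x, y) (x, y + 1))
    (diag : ∀ x y, P (x + 1, y) (x, y + 1)) {p q : ℤ × ℤ} (h : triLattice.Adj p q) : P p q := by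
  suffices hsub : ∀ p q : ℤ × ℤ, q - p ∈ ({(1, 0), (-1, 0), (0, 1), (0, -1), (-1, 1), (1, -1)} :
      Set (ℤ × ℤ)) → P p q from h.2.elim (hsub p q) fun h => symm _ _ (hsub q p h)
  rintro ⟨x, y⟩ ⟨x', y'⟩ (h | h | h | h | h | h)
  all_goals
    obtain ⟨hx, hy⟩ := Prod.ext_iff.1 h
    simp only [Prod.fst_sub, Prod.snd_sub, sub_eq_iff_eq_add'] at hx hy
    subst hx hy
  · simpa using right x y
  · exact symm _ _ (by simpa using right (x + -1) y)
  · simpa using up x y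
  · exact symm _ _ (by simpa using up x (y + -1))
  · simpa using diag (x + -1) y
  · exact symm _ _ (by simpa using diag x (y + -1))

/-- The horizontal line of `Q` at height `y`. -/
def row (Q : Set (ℤ × ℤ)) (y : ℤ) : Set ℤ := {x | (x, y) ∈ Q}

variable {Q : Set (ℤ × ℤ)}

lemma noTriangles_row (hQ : (triLattice.induce Q).CliqueFree 3) (y : ℤ) :
    NoTriangles (row Q y) (row Q (y + 1)) := by
  have not_triangle {p q s : ℤ × ℤ} (hp : p ∈ Q) (hq : q ∈ Q) (hs : s ∈ Q)
      (hpq : triLattice.Adj p q) (hps : triLattice.Adj p s) : ¬triLattice.Adj q s := fun hqs =>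
    hQ {⟨p, hp⟩, ⟨q, hq⟩, ⟨s, hs⟩} (by
      rw [SimpleGraph.is3Clique_triple_iff]
      exact ⟨hpq, hps, hqs⟩)
  exact ⟨fun x hx hx₁ hx' => not_triangle hx hx₁ hx' (adj_right x y)
      (adj_up x y) (adj_diag x y),
    fun x hx₁ hx' hx₁' => not_triangle hx₁ hx' hx₁' (adj_diag x y)
      (adj_up (x + 1) y) (adj_right x (y + 1))⟩

lemma nonempty_hom_oddGraph_of_finite (hfin : Q.Finite)
    (hQ : (triLattice.induce Q).CliqueFree 3) : Nonempty (triLattice.induce Q →g oddGraph) := by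
  obtain ⟨y₀, hy₀⟩ := (hfin.image Prod.snd).bddBelow
  obtain ⟨F, hF, hF'⟩ := exists_row_colorings (r := fun n => row Q (y₀ + n))
    (fun n => hfin.preimage (Prod.mk_left_injective _).injOn)
    fun n => by simpa [add_assoc] using noTriangles_row hQ (y₀ + n)
  have exists_eq {x y : ℤ} (h : (x, y) ∈ Q) : ∃ n : ℕ, y = y₀ + n :=
    Int.le.dest (hy₀ (Set.mem_image_of_mem _ h)) |>.imp fun _ => Eq.symm
  let c (p : ℤ × ℤ) : Triple := F (p.2 - y₀).toNat p.1
  have c_apply (n : ℕ) (x : ℤ) : c (x, y₀ + n) = F n x := by simp [c]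
  have mem_admissible {x y : ℤ} (hp : (x, y + 1) ∈ Q) (n : ℕ) (hy : y = y₀ + n) :
      c (x, y + 1) ∈ admissible (row Q y) (F n) x := by
    subst hy
    have hsucc : y₀ + n + 1 = y₀ + (n + 1 : ℕ) := by push_cast; ring
    rw [hsucc] at hp ⊢
    exact c_apply (n + 1) x ▸ hF' n x hp
  have adj {p q : ℤ × ℤ} (hpq : triLattice.Adj p q) :
      p ∈ Q → q ∈ Q → oddGraph.Adj (c p) (c q) := by
    refine adj_induction (P := fun p q => p ∈ Q → q ∈ Q → oddGraph.Adj (c p) (c q))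
      (fun p q h hq hp => (h hp hq).symm) ?_ ?_ ?_ hpq <;> intro x y hp hq <;>
      obtain ⟨n, rfl⟩ := exists_eq hp
    · rw [c_apply, c_apply]
      exact (hF n).overlap_eq_zero hp hq
    · rw [c_apply]
      exact (mem_admissible hq n rfl).1 hp
    · rw [c_apply]
      exact (mem_admissible hq n rfl).2 hp
  exact ⟨⟨fun p => c p, fun {p q} hpq => adj hpq p.2 q.2⟩⟩

lemma nonempty_hom_oddGraph {R : Set (ℤ × ℤ)} (hR : (triLattice.induce R).CliqueFree 3) :
    Nonempty (triLattice.induce R →g oddGraph) := by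
  refine SimpleGraph.nonempty_hom_of_forall_finite_subgraph_hom fun G hG => ?_
  have hsub : Subtype.val '' G.verts ⊆ R := by
    rintro _ ⟨v, -, rfl⟩
    exact v.2
  have φ : triLattice.induce (Subtype.val '' G.verts) →g oddGraph :=
    (nonempty_hom_oddGraph_of_finite (hG.image _)
      (hR.comap ⟨(SimpleGraph.induceHomOfLE _ hsub).toCopy⟩)).some
  exact ⟨fun v => φ ⟨v.1, Set.mem_image_of_mem _ v.2⟩, fun h => φ.map_rel' h.adj_sub⟩

end triLattice

theorem triangleFree_subgraph_of_triLattice_73_colorable (R : Set (ℤ × ℤ))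
    (htf : (triLattice.induce R).CliqueFree 3) :
    ∃ c : R → Finset ℕ, (∀ v, c v ⊆ Finset.Icc 1 7 ∧ (c v).card = 3) ∧
      ∀ u v, (triLattice.induce R).Adj u v → Disjoint (c u) (c v) := by
  obtain ⟨φ⟩ := triLattice.nonempty_hom_oddGraph htf
  let succVal : Fin 7 ↪ ℕ := Fin.valEmbedding.trans (addRightEmbedding 1)
  refine ⟨fun v => (φ v).1.map succVal, fun v => ⟨?_, by rw [card_map, (φ v).2]⟩, fun u v huv => ?_⟩
  · refine map_subset_iff_subset_preimage.2 fun i _ => ?_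
    simp [succVal]
  · exact (disjoint_map _).2 (disjoint_iff_inter_eq_empty.2 (card_eq_zero.1 (φ.map_adj huv)))
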